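/- arXiv:1411.6672 — 3 statements merged into one kernel-verified Lean document; each statement's English description precedes it below -/
import Mathlib

section
/- Let p₁, p₂ ∈ ℝ², let v ∈ ℝ² be a nonzero vector, and let φ : [0,1] → ℝ² be a continuous map that is injective on [0,1) and satisfies either φ(0) = p₁, φ(1) = p₂ with φ injective on all of [0,1], or φ(0) = φ(1) (a simple closed curve). Suppose the image of φ is disjoint from its translate by v, i.e., φ([0,1]) ∩ (φ([0,1]) + v) = ∅. Then for all integers k ≠ ℓ, the translates φ([0,1]) + k·v and φ([0,1]) + ℓ·v are disjoint. -/
/-- Translate of a planar set by a vector. -/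
def setTranslate (A : Set (ℝ × ℝ)) (v : ℝ × ℝ) : Set (ℝ × ℝ) := (· + v) '' A

/-!
Let `K` be a path in the plane from `z` to `z + (a + b) • v`, where `a, b ≥ 0`, and identify the
plane with `ℂ` so that `v = 1`. The translates `K - b` and `K + a` share the point `z + a`, so their
union contains a path which starts no further right than the leftmost point of `K`, ends no further
left than the rightmost one and stays in the horizontal strip spanned by `K`. It must cross `K`,
which joins the bottom of the strip to its top, so `K` meets its translate by `a • v` or by `b • v`.
By induction, a path-connected set that meets its translate by `n • v` for some `n ≥ 1` meets its
translate by `v`.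

The crossing is a zero of the difference of the two paths, found by the planar Poincaré–Miranda
theorem: a nowhere vanishing map on a simply connected product has a continuous logarithm, whereas
the sign conditions make its argument increase by `2π` around the boundary.
-/

open Complex Set

section PoincareMiranda

theorem mem_slitPlane_of_re_nonneg {z : ℂ} (hz : z ≠ 0) (hre : 0 ≤ z.re) : z ∈ slitPlane := by
  by_contra h
  obtain ⟨hre', him⟩ := not_or.1 (mem_slitPlane_iff.not.1 h)
  exact hz (Complex.ext (le_antisymm (not_lt.1 hre') hre) (not_not.1 him))

theorem log_I_mul {z : ℂ} (hz : z ≠ 0) (hre : 0 ≤ z.re) :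
    log (I * z) = log z + Real.pi / 2 * I := by
  have harg := abs_le.1 (abs_arg_le_pi_div_two_iff.2 hre)
  have hsum : arg I + arg z ∈ Ioc (-Real.pi) Real.pi := by
    rw [arg_I]
    constructor <;> linarith [Real.pi_pos, harg.1, harg.2]
  rw [log_mul I_ne_zero hz hsum, log_I, add_comm]

/-- The principal logarithm of `u * exp w` minus `w`, which is a logarithm of `u` for `u ≠ 0`. Along
a continuous `w` it stays constant as long as `u * exp w` avoids the branch cut. -/
noncomputable def branchGap (u w : ℂ) : ℂ := log (u * exp w) - w

theorem exp_branchGap {u : ℂ} (hu : u ≠ 0) (w : ℂ) : exp (branchGap u w) = u := by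
  rw [branchGap, exp_sub, exp_log (mul_ne_zero hu (exp_ne_zero w)),
    mul_div_cancel_right₀ _ (exp_ne_zero w)]

theorem branchGap_I_mul {u w : ℂ} (hu : u ≠ 0) (hre : 0 ≤ (u * exp w).re) :
    branchGap (I * u) w = branchGap u w + Real.pi / 2 * I := by
  rw [branchGap, branchGap, mul_assoc, log_I_mul (mul_ne_zero hu (exp_ne_zero w)) hre]
  ring

theorem branchGap_eq_of_re_nonneg {Z : Type*} [TopologicalSpace Z] [PreconnectedSpace Z]
    {L : Z → ℂ} (hL : Continuous L) {u : ℂ} (hu : u ≠ 0) (hre : ∀ z, 0 ≤ (u * exp (L z)).re)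
    (z w : Z) : branchGap u (L z) = branchGap u (L w) := by
  have hslit (z : Z) : u * exp (L z) ∈ slitPlane :=
    mem_slitPlane_of_re_nonneg (mul_ne_zero hu (exp_ne_zero _)) (hre z)
  have hcont : Continuous fun z ↦ branchGap u (L z) :=
    ((continuous_const.mul hL.cexp).clog hslit).sub hL
  exact isCoveringMap_exp.const_of_comp hcont
    (fun z w ↦ Subtype.ext ((exp_branchGap hu _).trans (exp_branchGap hu _).symm)) z w

variable {X Y : Type*} [TopologicalSpace X] [TopologicalSpace Y]

theorem not_exp_boundary_signs [PreconnectedSpace X] [PreconnectedSpace Y] {L : X × Y → ℂ}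
    (hL : Continuous L) (x₀ x₁ : X) (y₀ y₁ : Y) :
    ¬((∀ y, (exp (L (x₀, y))).re ≤ 0) ∧ (∀ y, 0 ≤ (exp (L (x₁, y))).re) ∧
      (∀ x, (exp (L (x, y₀))).im ≤ 0) ∧ ∀ x, 0 ≤ (exp (L (x, y₁))).im) := by
  rintro ⟨left, right, bottom, top⟩
  let D (u : ℂ) (p : X × Y) : ℂ := branchGap u (L p)
  have horizontal {u : ℂ} (hu : u ≠ 0) {y : Y} (h : ∀ x, 0 ≤ (u * exp (L (x, y))).re) (x x' : X) :
      D u (x, y) = D u (x', y) :=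
    branchGap_eq_of_re_nonneg (hL.comp (.prodMk_left y)) hu h x x'
  have vertical {u : ℂ} (hu : u ≠ 0) {x : X} (h : ∀ y, 0 ≤ (u * exp (L (x, y))).re) (y y' : Y) :
      D u (x, y) = D u (x, y') :=
    branchGap_eq_of_re_nonneg (hL.comp (.prodMk_right x)) hu h y y'
  have corner {u w : ℂ} (hu : u ≠ 0) (hw : I * u = w) {p : X × Y} (h : 0 ≤ (u * exp (L p)).re) :
      D w p = D u p + Real.pi / 2 * I := hw ▸ branchGap_I_mul hu h
  have right' (y : Y) : 0 ≤ (1 * exp (L (x₁, y))).re := by simpa using right y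
  have top' (x : X) : 0 ≤ (-I * exp (L (x, y₁))).re := by simpa using top x
  have left' (y : Y) : 0 ≤ (-1 * exp (L (x₀, y))).re := by simpa using left y
  have bottom' (x : X) : 0 ≤ (I * exp (L (x, y₀))).re := by simpa using bottom x
  have full_turn : D 1 (x₁, y₀) = D 1 (x₁, y₀) + 2 * Real.pi * I := calc
    D 1 (x₁, y₀) = D 1 (x₁, y₁) := vertical one_ne_zero right' _ _
    _ = D (-I) (x₁, y₁) + Real.pi / 2 * I := corner (by simp) (by simp) (top' x₁)
    _ = D (-I) (x₀, y₁) + Real.pi / 2 * I := by rw [horizontal (by simp) top' x₁ x₀]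
    _ = D (-1) (x₀, y₁) + Real.pi * I := by
      rw [corner (by simp) (by simp) (left' y₁)]; ring
    _ = D (-1) (x₀, y₀) + Real.pi * I := by rw [vertical (by simp) left' y₁ y₀]
    _ = D I (x₀, y₀) + 3 * Real.pi / 2 * I := by
      rw [corner I_ne_zero I_mul_I (bottom' x₀)]; ring
    _ = D I (x₁, y₀) + 3 * Real.pi / 2 * I := by rw [horizontal I_ne_zero bottom' x₀ x₁]
    _ = D 1 (x₁, y₀) + 2 * Real.pi * I := by
      rw [corner one_ne_zero (mul_one I) (right' y₀)]; ring
  exact two_pi_I_ne_zero (left_eq_add.1 full_turn)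

theorem exists_continuousMap_exp_eq {Z : Type*} [TopologicalSpace Z] [SimplyConnectedSpace Z]
    [LocallyPathConnectedSpace Z] (f : C(Z, ℂ)) (hf : ∀ z, f z ≠ 0) :
    ∃ L : C(Z, ℂ), ∀ z, exp (L z) = f z := by
  obtain ⟨z₀⟩ : Nonempty Z := inferInstance
  obtain ⟨L, ⟨-, hL⟩, -⟩ := isCoveringMapOn_exp.existsUnique_continuousMap_lifts f
    (exp_log (hf z₀)) hf
  exact ⟨L, congrFun hL⟩

theorem exists_eq_zero_of_boundary_signs [ContractibleSpace X] [ContractibleSpace Y]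
    [LocallyPathConnectedSpace X] [LocallyPathConnectedSpace Y] {f : X × Y → ℂ}
    (hf : Continuous f) {x₀ x₁ : X} {y₀ y₁ : Y}
    (left : ∀ y, (f (x₀, y)).re ≤ 0) (right : ∀ y, 0 ≤ (f (x₁, y)).re)
    (bottom : ∀ x, (f (x, y₀)).im ≤ 0) (top : ∀ x, 0 ≤ (f (x, y₁)).im) :
    ∃ p, f p = 0 := by
  by_contra! hne
  obtain ⟨L, hL⟩ := exists_continuousMap_exp_eq ⟨f, hf⟩ hne
  simp only [ContinuousMap.coe_mk] at hL
  exact not_exp_boundary_signs L.continuous x₀ x₁ y₀ y₁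
    (by simpa only [hL] using ⟨left, right, bottom, top⟩)

end PoincareMiranda

instance contractibleSpace_unitInterval : ContractibleSpace unitInterval :=
  (convex_Icc 0 1).contractibleSpace (nonempty_Icc.2 zero_le_one)

instance locallyPathConnectedSpace_unitInterval : LocallyPathConnectedSpace unitInterval :=
  (convex_Icc 0 1).locallyPathConnectedSpace

theorem inter_nonempty_of_isPathConnected_of_crossing {A B : Set ℂ} (hA : IsPathConnected A)
    (hB : IsPathConnected B) {l r b t : ℂ} (hl : l ∈ A) (hr : r ∈ A) (hb : b ∈ B) (ht : t ∈ B)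
    (left : ∀ z ∈ B, l.re ≤ z.re) (right : ∀ z ∈ B, z.re ≤ r.re)
    (bottom : ∀ z ∈ A, b.im ≤ z.im) (top : ∀ z ∈ A, z.im ≤ t.im) :
    (A ∩ B).Nonempty := by
  obtain ⟨α, hα⟩ := hA.joinedIn l hl r hr
  obtain ⟨β, hβ⟩ := hB.joinedIn t ht b hb
  have hcont : Continuous fun p : unitInterval × unitInterval ↦ α p.1 - β p.2 := by fun_prop
  obtain ⟨⟨s, s'⟩, h⟩ := exists_eq_zero_of_boundary_signs hcont (x₀ := 0) (x₁ := 1) (y₀ := 0)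
    (y₁ := 1) (fun s' ↦ by simpa using left _ (hβ s')) (fun s' ↦ by simpa using right _ (hβ s'))
    (fun s ↦ by simpa using top _ (hα s)) (fun s ↦ by simpa using bottom _ (hα s))
  exact ⟨α s, hα s, sub_eq_zero.1 h ▸ hβ s'⟩

/-- The (signed) lengths of the horizontal chords of `K`, that is, the real translations carrying
some point of `K` to a point of `K`. -/
def horizontalChordSet (K : Set ℂ) : Set ℝ := {h | ∃ z ∈ K, z + h ∈ K}

theorem horizontalChordSet_mono {K K' : Set ℂ} (h : K ⊆ K') :
    horizontalChordSet K ⊆ horizontalChordSet K' :=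
  fun _ ⟨z, hz, hz'⟩ ↦ ⟨z, h hz, h hz'⟩

theorem mem_or_mem_of_add_mem_horizontalChordSet_of_isCompact {K : Set ℂ} (hKc : IsCompact K)
    (hK : IsPathConnected K) {a b : ℝ} (ha : 0 ≤ a) (hb : 0 ≤ b)
    (hab : a + b ∈ horizontalChordSet K) :
    a ∈ horizontalChordSet K ∨ b ∈ horizontalChordSet K := by
  obtain ⟨z, hz, hz'⟩ := hab
  obtain ⟨l, hl, left⟩ := hKc.exists_isMinOn hK.nonempty continuous_re.continuousOn
  obtain ⟨r, hr, right⟩ := hKc.exists_isMaxOn hK.nonempty continuous_re.continuousOn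
  obtain ⟨d, hd, bottom⟩ := hKc.exists_isMinOn hK.nonempty continuous_im.continuousOn
  obtain ⟨t, ht, top⟩ := hKc.exists_isMaxOn hK.nonempty continuous_im.continuousOn
  have hmeet : ((· - (b : ℂ)) '' K ∩ (· + (a : ℂ)) '' K).Nonempty :=
    ⟨z + a, ⟨_, hz', by push_cast; ring⟩, z, hz, rfl⟩
  have hunion : IsPathConnected ((· - (b : ℂ)) '' K ∪ (· + (a : ℂ)) '' K) :=
    (hK.image (by fun_prop)).union (hK.image (by fun_prop)) hmeet
  have him : ∀ w ∈ (· - (b : ℂ)) '' K ∪ (· + (a : ℂ)) '' K, ∃ z ∈ K, w.im = z.im := by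
    rintro _ (⟨z, hz, rfl⟩ | ⟨z, hz, rfl⟩) <;> exact ⟨z, hz, by simp⟩
  obtain ⟨_, ⟨u, hu, rfl⟩ | ⟨u, hu, rfl⟩, hw⟩ := inter_nonempty_of_isPathConnected_of_crossing
    hunion hK (.inl ⟨l, hl, rfl⟩) (.inr ⟨r, hr, rfl⟩) hd ht
    (fun z hz ↦ by simpa using (left hz).trans (le_add_of_nonneg_right hb))
    (fun z hz ↦ by simpa using (right hz).trans (le_add_of_nonneg_right ha))
    (fun w hw ↦ by obtain ⟨z, hz, h⟩ := him w hw; exact h ▸ bottom hz)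
    (fun w hw ↦ by obtain ⟨z, hz, h⟩ := him w hw; exact h ▸ top hz)
  · exact .inr ⟨_, hw, by simpa using hu⟩
  · exact .inl ⟨u, hu, hw⟩

theorem mem_or_mem_of_add_mem_horizontalChordSet {K : Set ℂ} (hK : IsPathConnected K) {a b : ℝ}
    (ha : 0 ≤ a) (hb : 0 ≤ b) (hab : a + b ∈ horizontalChordSet K) :
    a ∈ horizontalChordSet K ∨ b ∈ horizontalChordSet K := by
  obtain ⟨z, hz, hz'⟩ := hab
  obtain ⟨γ, hγ⟩ := hK.joinedIn z hz _ hz'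
  have hsub : horizontalChordSet (range γ) ⊆ horizontalChordSet K :=
    horizontalChordSet_mono (range_subset_iff.2 hγ)
  exact (mem_or_mem_of_add_mem_horizontalChordSet_of_isCompact (isCompact_range γ.continuous)
    (isPathConnected_range γ.continuous) ha hb ⟨z, γ.source_mem_range, γ.target_mem_range⟩).imp
    (@hsub a) (@hsub b)

theorem mem_horizontalChordSet_of_nsmul_mem {K : Set ℂ} (hK : IsPathConnected K) {c : ℝ}
    (hc : 0 ≤ c) {n : ℕ} (hn : n ≠ 0) (h : n • c ∈ horizontalChordSet K) :
    c ∈ horizontalChordSet K := by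
  induction n, Nat.one_le_iff_ne_zero.2 hn using Nat.le_induction with
  | base => rwa [one_nsmul] at h
  | succ n hn₁ ih =>
    rw [succ_nsmul] at h
    exact (mem_or_mem_of_add_mem_horizontalChordSet hK (nsmul_nonneg hc n) hc h).elim
      (ih (Nat.one_le_iff_ne_zero.1 hn₁)) id

theorem exists_add_mem_of_add_nsmul_mem {E : Type*} [AddCommGroup E] [Module ℝ E]
    [TopologicalSpace E] [IsTopologicalAddGroup E] [ContinuousSMul ℝ E] [T2Space E]
    (hE : Module.finrank ℝ E = 2) {A : Set E} (hA : IsPathConnected A) {x v : E} {n : ℕ}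
    (hn : n ≠ 0) (hx : x ∈ A) (hxn : x + n • v ∈ A) :
    ∃ w ∈ A, w + v ∈ A := by
  rcases eq_or_ne v 0 with rfl | hv
  · exact ⟨x, hx, by simpa using hx⟩
  have : FiniteDimensional ℝ E := .of_finrank_pos (by simp [hE])
  let f : E ≃L[ℝ] ℂ := .ofFinrankEq (hE.trans finrank_real_complex.symm)
  obtain ⟨g, hg⟩ := SeparatingDual.exists_continuousLinearEquiv_apply_eq (R := ℝ)
    (f.map_ne_zero_iff.2 hv) one_ne_zero
  let e : E ≃L[ℝ] ℂ := f.trans g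
  have he : e v = 1 := hg
  have hchord : n • (1 : ℝ) ∈ horizontalChordSet (e '' A) :=
    ⟨e x, ⟨x, hx, rfl⟩, _, hxn, by simp [he]⟩
  obtain ⟨_, ⟨w, hw, rfl⟩, w', hw', h⟩ :=
    mem_horizontalChordSet_of_nsmul_mem (hA.image e.continuous) zero_le_one hn hchord
  have hw'' : w' = w + v := e.injective (by simp [h, he])
  exact ⟨w, hw, hw'' ▸ hw'⟩

theorem curve_translates_disjoint_general {A : Set (ℝ × ℝ)} (hA : IsPathConnected A) {v : ℝ × ℝ}
    (hdisj : A ∩ setTranslate A v = ∅) {k ℓ : ℤ} (hkl : k ≠ ℓ) :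
    setTranslate A ((k : ℝ) • v) ∩ setTranslate A ((ℓ : ℝ) • v) = ∅ := by
  wlog hlt : k < ℓ generalizing k ℓ
  · rw [inter_comm]
    exact this hkl.symm (hkl.lt_or_gt.resolve_left hlt)
  rw [eq_empty_iff_forall_notMem]
  rintro _ ⟨⟨x, hx, rfl⟩, y, hy, hxy⟩
  obtain ⟨n, hn⟩ := Int.le.dest hlt.le
  have hn₀ : n ≠ 0 := by lia
  have hyx : y + n • v = x := by
    refine add_right_cancel (Eq.trans ?_ hxy)
    rw [← hn, ← Nat.cast_smul_eq_nsmul ℝ]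
    push_cast
    module
  obtain ⟨w, hw, hwv⟩ := exists_add_mem_of_add_nsmul_mem (by simp) hA hn₀ hy (hyx ▸ hx)
  exact eq_empty_iff_forall_notMem.1 hdisj (w + v) ⟨hwv, w, hw, rfl⟩

/-- If a simple curve (possibly closed) is disjoint from its setTranslate by a nonzero
vector `v`, then all its translates by distinct integer multiples of `v` are
mutually disjoint. -/
theorem curve_translates_disjoint (p₁ p₂ v : ℝ × ℝ) (hv : v ≠ 0)
    (φ : ℝ → ℝ × ℝ)
    (hcont : ContinuousOn φ (Set.Icc 0 1))
    (hinj : Set.InjOn φ (Set.Ico 0 1))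
    (hends : (Set.InjOn φ (Set.Icc 0 1) ∧ φ 0 = p₁ ∧ φ 1 = p₂) ∨ φ 0 = φ 1)
    (hdisj : (φ '' Set.Icc 0 1) ∩ setTranslate (φ '' Set.Icc 0 1) v = ∅) :
    ∀ k ℓ : ℤ, k ≠ ℓ →
      setTranslate (φ '' Set.Icc 0 1) ((k : ℝ) • v) ∩
        setTranslate (φ '' Set.Icc 0 1) ((ℓ : ℝ) • v) = ∅ := by
  exact fun _ _ ↦ curve_translates_disjoint_general
    (((convex_Icc 0 1).isPathConnected (Set.nonempty_Icc.2 zero_le_one)).image' hcont) hdisj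
end

section
/- Let n ≥ 1 be an integer, p ∈ ℝ² a point, and v ∈ ℝ² a nonzero vector. Let φ : [0,1] → ℝ² be a continuous injective map with φ(0) = p and φ(1) = p + n·v. Then the image of φ intersects its translate by v, i.e., φ([0,1]) ∩ (φ([0,1]) + v) ≠ ∅. -/
/-!
This is Hopf's argument for the universal chord theorem: if neither `a` nor `b` is the length of a
horizontal chord of a plane curve `ψ`, then neither is `a + b`. Indeed `ψ s - ψ t - a` and
`ψ s - ψ t - b` then never vanish, so they have continuous arguments `α (s, t)` and `β (s, t)`,
normalised to be `π` on the diagonal. Suppose `ψ s - ψ t = a + b` and let `u` run along the curve.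
At a highest point `α (s, u) ≥ π ≥ β (u, t)` and at a lowest point `α (s, u) ≤ π ≤ β (u, t)`, so
the two arguments agree for some `u`. But `ψ s - ψ u - a` and `ψ u - ψ t - b` are opposite, a
contradiction. Hence a chord `n • v` forces a chord `v`.
-/

open Complex Module
open scoped Real

section Chord

variable {X E F : Type*}

/-- `w` is a chord of the parametrised curve `ψ` if `w` is the difference of two points of its
image, in other words if the image meets its translate by `w`. -/
def HasChord [Add E] (ψ : X → E) (w : E) : Prop :=
  ∃ s t, ψ s = ψ t + w

lemma hasChord_zero [AddZeroClass E] [Nonempty X] (ψ : X → E) : HasChord ψ 0 :=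
  ‹Nonempty X›.elim fun x ↦ ⟨x, x, (add_zero _).symm⟩

lemma hasChord_comp_iff {G : Type*} [Add E] [Add F] [FunLike G E F] [AddHomClass G E F] {L : G}
    (hL : Function.Injective L) {ψ : X → E} {w : E} :
    HasChord (L ∘ ψ) (L w) ↔ HasChord ψ w := by
  simp only [HasChord, Function.comp_apply, ← map_add, hL.eq_iff]

end Chord

section Argument

variable {X : Type*} [TopologicalSpace X] [PreconnectedSpace X]

lemma le_pi_of_sin_nonneg {θ : X → ℝ} (hθ : Continuous θ) (hsin : ∀ x, 0 ≤ Real.sin (θ x))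
    {x₀ : X} (h₀ : θ x₀ ≤ π) (x : X) : θ x ≤ π := by
  by_contra! hx
  obtain ⟨c, hπc, hc⟩ := exists_between (lt_min hx (by linarith [Real.pi_pos] : π < 2 * π))
  obtain ⟨hcx, hc2⟩ := lt_min_iff.1 hc
  obtain ⟨y, rfl⟩ := mem_range_of_exists_le_of_exists_ge hθ ⟨x₀, h₀.trans hπc.le⟩ ⟨x, hcx.le⟩
  have hneg : Real.sin (θ y - 2 * π) < 0 :=
    Real.sin_neg_of_neg_of_neg_pi_lt (by linarith) (by linarith)
  rw [Real.sin_sub_two_pi] at hneg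
  exact hneg.not_ge (hsin y)

lemma pi_le_of_sin_nonpos {θ : X → ℝ} (hθ : Continuous θ) (hsin : ∀ x, Real.sin (θ x) ≤ 0)
    {x₀ : X} (h₀ : π ≤ θ x₀) (x : X) : π ≤ θ x := by
  have hreflect : 2 * π - θ x ≤ π :=
    le_pi_of_sin_nonneg (θ := fun x ↦ 2 * π - θ x) (x₀ := x₀) (by fun_prop)
      (fun x ↦ by simpa only [Real.sin_two_pi_sub, neg_nonneg] using hsin x) (by linarith) x
  linarith

lemma im_le_pi_of_im_exp_nonneg {f : X → ℂ} (hf : Continuous f) (hexp : ∀ x, 0 ≤ (exp (f x)).im)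
    {x₀ : X} (h₀ : (f x₀).im ≤ π) (x : X) : (f x).im ≤ π :=
  le_pi_of_sin_nonneg (continuous_im.comp hf)
    (fun y ↦ nonneg_of_mul_nonneg_right (exp_im (f y) ▸ hexp y) (Real.exp_pos _)) h₀ x

lemma pi_le_im_of_im_exp_nonpos {f : X → ℂ} (hf : Continuous f) (hexp : ∀ x, (exp (f x)).im ≤ 0)
    {x₀ : X} (h₀ : π ≤ (f x₀).im) (x : X) : π ≤ (f x).im :=
  pi_le_of_sin_nonpos (continuous_im.comp hf)
    (fun y ↦ nonpos_of_mul_nonpos_right (exp_im (f y) ▸ hexp y) (Real.exp_pos _)) h₀ x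

end Argument

lemma exp_add_exp_ne_zero_of_im_eq {z w : ℂ} (h : z.im = w.im) : exp z + exp w ≠ 0 := by
  intro hsum
  have hzw : z - w = ((z.re - w.re : ℝ) : ℂ) := Complex.ext (by simp) (by simp [h])
  have hexp : exp (z - w) = -1 := by
    rw [exp_sub, div_eq_iff (exp_ne_zero w), neg_one_mul]
    exact eq_neg_of_add_eq_zero_left hsum
  rw [hzw, ← ofReal_exp] at hexp
  have hre : Real.exp (z.re - w.re) = -1 := by exact_mod_cast hexp
  linarith [Real.exp_pos (z.re - w.re)]

section HorizontalChord

variable {X : Type*} [TopologicalSpace X]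

/-- `g` is a continuous logarithm of the function `(s, t) ↦ ψ s - ψ t - a`, on the branch whose
argument is `π` on the diagonal, where that function takes the value `-a`. -/
structure IsChordLog (ψ : X → ℂ) (a : ℝ) (g : X × X → ℂ) : Prop where
  continuous : Continuous g
  exp_eq : ∀ s t, exp (g (s, t)) = ψ s - ψ t - a
  im_diag : ∀ t, (g (t, t)).im = π

namespace IsChordLog

variable [PreconnectedSpace X] {ψ : X → ℂ} {a : ℝ} {g : X × X → ℂ} {x : X}

lemma im_left_le_pi (hg : IsChordLog ψ a g) (hmax : ∀ t, (ψ t).im ≤ (ψ x).im) (t : X) :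
    (g (x, t)).im ≤ π :=
  im_le_pi_of_im_exp_nonneg (f := fun t ↦ g (x, t)) (hg.continuous.comp (by fun_prop))
    (fun t ↦ by simpa [hg.exp_eq] using hmax t) (hg.im_diag x).le t

lemma pi_le_im_left (hg : IsChordLog ψ a g) (hmin : ∀ t, (ψ x).im ≤ (ψ t).im) (t : X) :
    π ≤ (g (x, t)).im :=
  pi_le_im_of_im_exp_nonpos (f := fun t ↦ g (x, t)) (hg.continuous.comp (by fun_prop))
    (fun t ↦ by simpa [hg.exp_eq] using hmin t) (hg.im_diag x).ge t

lemma pi_le_im_right (hg : IsChordLog ψ a g) (hmax : ∀ s, (ψ s).im ≤ (ψ x).im) (s : X) :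
    π ≤ (g (s, x)).im :=
  pi_le_im_of_im_exp_nonpos (f := fun s ↦ g (s, x)) (hg.continuous.comp (by fun_prop))
    (fun s ↦ by simpa [hg.exp_eq] using hmax s) (hg.im_diag x).ge s

lemma im_right_le_pi (hg : IsChordLog ψ a g) (hmin : ∀ s, (ψ x).im ≤ (ψ s).im) (s : X) :
    (g (s, x)).im ≤ π :=
  im_le_pi_of_im_exp_nonneg (f := fun s ↦ g (s, x)) (hg.continuous.comp (by fun_prop))
    (fun s ↦ by simpa [hg.exp_eq] using hmin s) (hg.im_diag x).le s

lemma exists_im_eq {X : Type*} [TopologicalSpace X] [CompactSpace X] [ConnectedSpace X] {ψ : X → ℂ}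
    (hψ : Continuous ψ) {a b : ℝ} {f g : X × X → ℂ} (hf : IsChordLog ψ a f)
    (hg : IsChordLog ψ b g) (s t : X) :
    ∃ u, (f (s, u)).im = (g (u, t)).im := by
  have him : Continuous fun x ↦ (ψ x).im := continuous_im.comp hψ
  obtain ⟨top, -, htop⟩ := isCompact_univ.exists_isMaxOn Set.univ_nonempty him.continuousOn
  obtain ⟨bot, -, hbot⟩ := isCompact_univ.exists_isMinOn Set.univ_nonempty him.continuousOn
  rw [isMaxOn_univ_iff] at htop
  rw [isMinOn_univ_iff] at hbot
  exact intermediate_value_univ₂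
    (continuous_im.comp (hf.continuous.comp (by fun_prop)))
    (continuous_im.comp (hg.continuous.comp (by fun_prop)))
    ((hf.im_right_le_pi hbot s).trans (hg.pi_le_im_left hbot t))
    ((hg.im_left_le_pi htop t).trans (hf.pi_le_im_right htop s))

end IsChordLog

variable [ContractibleSpace X] [LocallyPathConnectedSpace X]

lemma exists_isChordLog {ψ : X → ℂ} (hψ : Continuous ψ) {a : ℝ} (ha : 0 < a)
    (hchord : ¬ HasChord ψ (a : ℂ)) : ∃ g, IsChordLog ψ a g := by
  obtain ⟨x₀⟩ : Nonempty X := inferInstance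
  let d : C(X × X, ℂ) := ⟨fun x ↦ ψ x.1 - ψ x.2 - a, by fun_prop⟩
  have hd : ∀ x, d x ∈ ({0}ᶜ : Set ℂ) := fun x hx ↦
    hchord ⟨x.1, x.2, sub_eq_iff_eq_add'.1 (sub_eq_zero.1 hx)⟩
  have hd₀ : exp (Real.log a + π * I) = d (x₀, x₀) := by
    simp [d, exp_add, ← ofReal_exp, Real.exp_log ha]
  obtain ⟨g, ⟨hg₀, hg⟩, -⟩ := isCoveringMapOn_exp.existsUnique_continuousMap_lifts d hd₀ hd
  have hexp : ∀ s t, exp (g (s, t)) = ψ s - ψ t - a := fun s t ↦ congrFun hg (s, t)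
  have him₀ : (g (x₀, x₀)).im = π := by simp [hg₀]
  have hcont : Continuous fun t ↦ g (t, t) := by fun_prop
  have him_exp : ∀ t, (exp (g (t, t))).im = 0 := by simp [hexp]
  exact ⟨g, g.continuous, hexp, fun t ↦ le_antisymm
    (im_le_pi_of_im_exp_nonneg hcont (fun t ↦ (him_exp t).ge) him₀.le t)
    (pi_le_im_of_im_exp_nonpos hcont (fun t ↦ (him_exp t).le) him₀.ge t)⟩

variable [CompactSpace X]

lemma HasChord.of_add {ψ : X → ℂ} (hψ : Continuous ψ) {a b : ℝ} (ha : 0 < a) (hb : 0 < b)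
    (hab : HasChord ψ (a + b : ℂ)) : HasChord ψ (a : ℂ) ∨ HasChord ψ (b : ℂ) := by
  by_contra! hno
  obtain ⟨s, t, hst⟩ := hab
  obtain ⟨f, hf⟩ := exists_isChordLog hψ ha hno.1
  obtain ⟨g, hg⟩ := exists_isChordLog hψ hb hno.2
  obtain ⟨u, hu⟩ := hf.exists_im_eq hψ hg s t
  apply exp_add_exp_ne_zero_of_im_eq hu
  rw [hf.exp_eq, hg.exp_eq]
  linear_combination hst

lemma HasChord.one_of_natCast {ψ : X → ℂ} (hψ : Continuous ψ) {n : ℕ} (hn : 1 ≤ n)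
    (hchord : HasChord ψ (n : ℂ)) : HasChord ψ 1 := by
  induction n, hn using Nat.le_induction with
  | base => simpa using hchord
  | succ k hk ih =>
    have hk₀ : (0 : ℝ) < k := by exact_mod_cast hk
    rcases HasChord.of_add hψ hk₀ one_pos (by simpa using hchord) with hchord_k | hchord_one
    · exact ih (by simpa using hchord_k)
    · simpa using hchord_one

end HorizontalChord

section Plane

variable {E : Type*} [AddCommGroup E] [Module ℝ E] [TopologicalSpace E] [IsTopologicalAddGroup E]
  [ContinuousSMul ℝ E] [T2Space E]

lemma exists_continuousLinearEquiv_complex_apply_eq_one (hE : finrank ℝ E = 2) {v : E}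
    (hv : v ≠ 0) : ∃ L : E ≃L[ℝ] ℂ, L v = 1 := by
  have : FiniteDimensional ℝ E := .of_finrank_pos (by simp [hE])
  let L₀ : E ≃L[ℝ] ℂ := .ofFinrankEq (hE.trans finrank_real_complex.symm)
  obtain ⟨M, hM⟩ : ∃ M : ℂ ≃L[ℝ] ℂ, M (L₀ v) = 1 :=
    SeparatingDual.exists_continuousLinearEquiv_apply_eq (by simpa using hv) one_ne_zero
  exact ⟨L₀.trans M, hM⟩

lemma HasChord.of_nsmul {X : Type*} [TopologicalSpace X] [ContractibleSpace X] [CompactSpace X]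
    [LocallyPathConnectedSpace X] (hE : finrank ℝ E = 2) {ψ : X → E} (hψ : Continuous ψ) {n : ℕ}
    (hn : 1 ≤ n) {v : E} (hchord : HasChord ψ (n • v)) : HasChord ψ v := by
  rcases eq_or_ne v 0 with rfl | hv
  · exact hasChord_zero ψ
  obtain ⟨L, hL⟩ := exists_continuousLinearEquiv_complex_apply_eq_one hE hv
  have hiff (w : E) : HasChord (L ∘ ψ) (L w) ↔ HasChord ψ w :=
    hasChord_comp_iff L.injective
  rw [← hiff, map_nsmul, hL, nsmul_one] at hchord
  rw [← hiff, hL]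
  exact hchord.one_of_natCast (L.continuous.comp hψ) hn

theorem curve_intersects_translate_general (hE : finrank ℝ E = 2) {n : ℕ} (hn : 1 ≤ n) {S : Set E}
    {p v : E} (hS : JoinedIn S p (p + n • v)) : (S ∩ (· + v) '' S).Nonempty := by
  obtain ⟨γ, hγ⟩ := hS
  have : ContractibleSpace unitInterval :=
    (convex_Icc 0 1).contractibleSpace (Set.nonempty_Icc.2 zero_le_one)
  have : LocallyPathConnectedSpace unitInterval := (convex_Icc 0 1).locallyPathConnectedSpace
  have hchord : HasChord γ (n • v) := ⟨1, 0, by simp⟩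
  obtain ⟨s, t, hst⟩ := hchord.of_nsmul hE γ.continuous hn
  exact ⟨γ s, hγ s, γ t, hγ t, hst.symm⟩

end Plane

/-- Any simple curve from `p` to `p + n • v`, with `n ≥ 1` an integer and `v` a
nonzero vector, intersects its setTranslate by `v`. -/
theorem curve_intersects_translate (n : ℕ) (hn : 1 ≤ n) (p v : ℝ × ℝ) (hv : v ≠ 0)
    (φ : ℝ → ℝ × ℝ)
    (hcont : ContinuousOn φ (Set.Icc 0 1))
    (hinj : Set.InjOn φ (Set.Icc 0 1))
    (h0 : φ 0 = p) (h1 : φ 1 = p + (n : ℝ) • v) :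
    ((φ '' Set.Icc 0 1) ∩ setTranslate (φ '' Set.Icc 0 1) v).Nonempty := by
  have hpath : IsPathConnected (φ '' Set.Icc 0 1) :=
    ((convex_Icc 0 1).isPathConnected (Set.nonempty_Icc.2 zero_le_one)).image' hcont
  exact curve_intersects_translate_general (by simp) hn
    (hpath.joinedIn p ⟨0, by simp, h0⟩ _ ⟨1, by simp, by rw [h1, Nat.cast_smul_eq_nsmul]⟩)
end

section
/- Let p ∈ ℝ², let v ∈ ℝ² be a nonzero vector, and let x ∈ ℝ be a non-integer real number with |x| > 1. Then there exists a continuous injective map φ : [0,1] → ℝ² with φ(0) = p and φ(1) = p + x·v such that the image of φ is disjoint from its translate by v, i.e., φ([0,1]) ∩ (φ([0,1]) + v) = ∅. -/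
/-!
In coordinates along `v` and a transverse vector `w`, the graph of a function `f` is disjoint from
its translate by `v` exactly when `f` has no horizontal chord of length one. For non-integer `x`,
Lévy's function `x sin² (π t) - t sin² (π x)` vanishes at `0` and at `x`, while over each unit step
it drops by `sin² (π x) > 0`, so its graph over the segment from `0` to `x` is the required curve.
-/

open Set

section GraphCurve

variable {R E : Type*} [Ring R] [AddCommGroup E] [Module R E]

/-- The graph of `f : R → R`, parametrised by its abscissa and drawn in the affine frame with
origin `p`, horizontal vector `v` and vertical vector `w`. -/
def graphCurve (p v w : E) (f : R → R) (t : R) : E := p + (t • v + f t • w)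

variable {p v w : E} {f : R → R}

theorem graphCurve_apply_of_eq_zero {t : R} (hft : f t = 0) :
    graphCurve p v w f t = p + t • v := by
  simp [graphCurve, hft]

theorem continuous_graphCurve [TopologicalSpace R] [TopologicalSpace E] [ContinuousAdd E]
    [ContinuousSMul R E] (hf : Continuous f) : Continuous (graphCurve p v w f) := by
  unfold graphCurve
  fun_prop

theorem graphCurve_injective (hvw : LinearIndependent R ![v, w]) :
    Function.Injective (graphCurve p v w f) :=
  fun _ _ h ↦ (hvw.eq_of_pair (add_left_cancel h)).1

theorem disjoint_range_graphCurve_translate (hvw : LinearIndependent R ![v, w])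
    (hf : ∀ t, f (t + 1) ≠ f t) :
    Disjoint (range (graphCurve p v w f)) ((· + v) '' range (graphCurve p v w f)) := by
  rw [disjoint_left]
  rintro _ ⟨s, rfl⟩ ⟨_, ⟨t, rfl⟩, h⟩
  have hcoord : (t + 1) • v + f t • w = s • v + f s • w :=
    add_left_cancel (a := p) <| by
      rw [add_smul, one_smul, add_right_comm, ← add_assoc]
      exact h
  obtain ⟨rfl, hfs⟩ := hvw.eq_of_pair hcoord
  exact hf t hfs.symm

end GraphCurve

section LevyFunction

open Real

/-- Lévy's counterexample to the existence of horizontal chords of length one for functions with a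
horizontal chord from `0` to a non-integer `x`, multiplied by `x` to avoid dividing. -/
noncomputable def levyFunction (x t : ℝ) : ℝ := x * sin (t * π) ^ 2 - t * sin (x * π) ^ 2

@[simp]
theorem levyFunction_zero (x : ℝ) : levyFunction x 0 = 0 := by
  simp [levyFunction]

@[simp]
theorem levyFunction_self (x : ℝ) : levyFunction x x = 0 :=
  sub_self _

theorem continuous_levyFunction (x : ℝ) : Continuous (levyFunction x) := by
  unfold levyFunction
  fun_prop

theorem levyFunction_add_one (x t : ℝ) :
    levyFunction x (t + 1) = levyFunction x t - sin (x * π) ^ 2 := by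
  simp only [levyFunction, add_one_mul, sin_add_pi]
  ring

theorem sin_mul_pi_ne_zero {x : ℝ} (hx : ∀ m : ℤ, x ≠ m) : sin (x * π) ≠ 0 :=
  sin_ne_zero_iff.mpr fun m h ↦ hx m (mul_right_cancel₀ pi_ne_zero h).symm

theorem levyFunction_add_one_ne {x : ℝ} (hx : ∀ m : ℤ, x ≠ m) (t : ℝ) :
    levyFunction x (t + 1) ≠ levyFunction x t := by
  rw [levyFunction_add_one, Ne, sub_eq_self]
  exact pow_ne_zero 2 (sin_mul_pi_ne_zero hx)

end LevyFunction

theorem exists_curve_avoiding_translate_general {E : Type*} [AddCommGroup E] [Module ℝ E]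
    [TopologicalSpace E] [ContinuousAdd E] [ContinuousSMul ℝ E] (hE : 1 < Module.rank ℝ E)
    (p : E) {v : E} (hv : v ≠ 0) {x : ℝ} (hx : ∀ m : ℤ, x ≠ m) :
    ∃ φ : ℝ → E, Continuous φ ∧ Function.Injective φ ∧ φ 0 = p ∧ φ 1 = p + x • v ∧
      Disjoint (range φ) ((· + v) '' range φ) := by
  obtain ⟨w, hvw⟩ := exists_linearIndependent_pair_of_one_lt_rank hE hv
  have hx0 : x ≠ 0 := by simpa using hx 0
  let γ : ℝ → E := graphCurve p v w (levyFunction x)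
  have hγ : Disjoint (range γ) ((· + v) '' range γ) :=
    disjoint_range_graphCurve_translate hvw (levyFunction_add_one_ne hx)
  have hrange : range (γ ∘ (x * ·)) ⊆ range γ := range_comp_subset_range _ _
  refine ⟨γ ∘ (x * ·), ?_, ?_, ?_, ?_, hγ.mono hrange (image_mono hrange)⟩
  · exact (continuous_graphCurve (continuous_levyFunction x)).comp (continuous_const_mul x)
  · exact (graphCurve_injective hvw).comp (mul_right_injective₀ hx0)
  · simp [γ, graphCurve_apply_of_eq_zero]
  · simp [γ, graphCurve_apply_of_eq_zero]

/-- For every non-integer real `x` with `|x| > 1` and every nonzero vector `v`,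
there is a simple curve from `p` to `p + x • v` whose image is disjoint from its
setTranslate by `v`. -/
theorem exists_curve_avoiding_translate (p v : ℝ × ℝ) (hv : v ≠ 0)
    (x : ℝ) (hx : ∀ m : ℤ, x ≠ (m : ℝ)) (hx1 : 1 < |x|) :
    ∃ φ : ℝ → ℝ × ℝ,
      ContinuousOn φ (Set.Icc 0 1) ∧
      Set.InjOn φ (Set.Icc 0 1) ∧
      φ 0 = p ∧ φ 1 = p + x • v ∧
      (φ '' Set.Icc 0 1) ∩ setTranslate (φ '' Set.Icc 0 1) v = ∅ := by
  obtain ⟨φ, hφ, hinj, h0, h1, hdisj⟩ :=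
    exists_curve_avoiding_translate_general (by simp [one_add_one_eq_two]) p hv hx
  have himage : φ '' Icc 0 1 ⊆ range φ := image_subset_range φ _
  exact ⟨φ, hφ.continuousOn, hinj.injOn, h0, h1,
    (hdisj.mono himage (image_mono himage)).inter_eq⟩
end
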